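/- arXiv:2504.06814 — 5 statements merged into one kernel-verified Lean document; each statement's English description precedes it below -/
import Mathlib

section
/- Let (M, g) be a Hadamard manifold and let f : M → ℝ be a g-convex differentiable function. Then for any x ∈ M and any η > 0, a point y ∈ M solves the equation x = Exp_y(η grad f(y)) if and only if y is the minimizer over z ∈ M of the function z ↦ f(z) + (1/(2η)) d(x, z)². -/
open scoped RealInnerProductSpace

/-- An abstract Hadamard manifold: a metric space `M` together with tangent
spaces (real inner product spaces), exponential and logarithm (inverse
exponential) maps that are mutually inverse, such that the exponential map is a
radial isometry and satisfies the CAT(0) (non-positive curvature) comparison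
inequality. -/
structure Hadamard (M : Type*) [MetricSpace M] where
  /-- tangent space at each point -/
  T : M → Type*
  [normed : ∀ x, NormedAddCommGroup (T x)]
  [ips : ∀ x, InnerProductSpace ℝ (T x)]
  /-- exponential map at each point -/
  exp : (x : M) → T x → M
  /-- inverse exponential map at each point -/
  log : (x : M) → M → T x
  exp_log : ∀ x y, exp x (log x y) = y
  log_exp : ∀ x v, log x (exp x v) = v
  dist_eq : ∀ x y, dist x y = ‖log x y‖
  comparison : ∀ (x : M) (v w : T x), ‖v - w‖ ≤ dist (exp x v) (exp x w)

attribute [instance] Hadamard.normed Hadamard.ips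

/-- Quasilinearized inner product `⟨→xy, →zw⟩`. -/
noncomputable def qip {M : Type*} [MetricSpace M] (x y z w : M) : ℝ :=
  (dist x w ^ 2 + dist y z ^ 2 - dist x z ^ 2 - dist y w ^ 2) / 2

/-- `f` is differentiable with Riemannian gradient `G`: along every geodesic
`t ↦ Exp_x (t v)` the derivative at `t = 0` is `⟪G x, v⟫`. -/
def HasRGrad {M : Type*} [MetricSpace M] (H : Hadamard M) (f : M → ℝ)
    (G : (x : M) → H.T x) : Prop :=
  ∀ (x : M) (v : H.T x), HasDerivAt (fun t : ℝ => f (H.exp x (t • v))) ⟪G x, v⟫ 0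

/-- Geodesic convexity of `f` (with Riemannian gradient `G`). -/
def GConvex {M : Type*} [MetricSpace M] (H : Hadamard M) (f : M → ℝ)
    (G : (x : M) → H.T x) : Prop :=
  ∀ x y : M, f y + ⟪G y, H.log y x⟫ ≤ f x

/-- `μ`-strong geodesic convexity of `f` (with Riemannian gradient `G`). -/
def StronglyGConvex {M : Type*} [MetricSpace M] (H : Hadamard M) (f : M → ℝ)
    (G : (x : M) → H.T x) (μ : ℝ) : Prop :=
  ∀ x y : M, f y + ⟪G y, H.log y x⟫ + μ / 2 * dist x y ^ 2 ≤ f x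

/-- Geodesic `L`-smoothness of `f` (with Riemannian gradient `G`). -/
def GSmooth {M : Type*} [MetricSpace M] (H : Hadamard M) (f : M → ℝ)
    (G : (x : M) → H.T x) (L : ℝ) : Prop :=
  ∀ x y : M, f y ≤ f x + ⟪G x, H.log x y⟫ + L / 2 * dist x y ^ 2


open Filter Topology

theorem ray_aux {E : Type*} [NormedAddCommGroup E] [InnerProductSpace ℝ E] (a b : E) (c : ℝ)
    (hc : 1 ≤ c) (h1 : ‖b - a‖ ≤ (c - 1) * ‖a‖) (h2 : ‖b‖ = c * ‖a‖) : b = c • a := by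
  have e1 := norm_sub_sq_real b a
  have e2 := norm_sub_sq_real b (c • a)
  rw [inner_smul_right, norm_smul, Real.norm_of_nonneg (by linarith)] at e2
  have h3 : ‖b - a‖ ^ 2 ≤ ((c - 1) * ‖a‖) ^ 2 := pow_le_pow_left₀ (norm_nonneg _) h1 2
  rw [h2] at e1 e2
  have h4 : c * ‖a‖ ^ 2 ≤ inner ℝ b a := by nlinarith
  have h5 : c * (c * ‖a‖ ^ 2) ≤ c * inner ℝ b a := mul_le_mul_of_nonneg_left h4 (by linarith)
  have h6 : ‖b - c • a‖ ^ 2 ≤ 0 := by nlinarith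
  have h7 : ‖b - c • a‖ = 0 := by
    have := sq_nonneg ‖b - c • a‖
    exact pow_eq_zero_iff (two_ne_zero) |>.1 (le_antisymm h6 this)
  exact sub_eq_zero.1 (norm_eq_zero.1 h7)

section
variable {M : Type*} [MetricSpace M] (H : Hadamard M)

theorem dist_exp_aux (q : M) (v : H.T q) : dist q (H.exp q v) = ‖v‖ := by
  rw [H.dist_eq, H.log_exp]

theorem comp_aux (m a b : M) : ‖H.log m a - H.log m b‖ ≤ dist a b := by
  have := H.comparison m (H.log m a) (H.log m b)
  rwa [H.exp_log, H.exp_log] at this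

theorem dist_opp_aux (q : M) (v : H.T q) (a b : ℝ) (ha : 0 ≤ a) (hb : 0 ≤ b) :
    dist (H.exp q (a • v)) (H.exp q (-(b • v))) = (a + b) * ‖v‖ := by
  apply le_antisymm
  · have := dist_triangle_left (H.exp q (a • v)) (H.exp q (-(b • v))) q
    rw [dist_exp_aux, dist_exp_aux, norm_neg, norm_smul, norm_smul, Real.norm_of_nonneg ha,
      Real.norm_of_nonneg hb] at this
    linarith
  · have := H.comparison q (a • v) (-(b • v))
    rwa [sub_neg_eq_add, ← add_smul, norm_smul, Real.norm_of_nonneg (by linarith)] at this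

theorem geo_aux (q : M) (v : H.T q) (l : ℝ) (h0 : 0 < l) (h1 : l < 1) :
    H.log (H.exp q (l • v)) (H.exp q v) =
      -(((1 - l) / l) • H.log (H.exp q (l • v)) q) := by
  set m := H.exp q (l • v) with hm
  set x := H.exp q v with hx
  set n := H.exp q (-v) with hn
  set e := H.log m q with he
  have hen : ‖e‖ = l * ‖v‖ := by
    rw [he, ← H.dist_eq, dist_comm, hm, dist_exp_aux, norm_smul, Real.norm_of_nonneg h0.le]
  have dmn : dist m n = (l + 1) * ‖v‖ := by
    have := dist_opp_aux H q v l 1 h0.le zero_le_one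
    rwa [one_smul] at this
  have dxn : dist x n = 2 * ‖v‖ := by
    have := dist_opp_aux H q v 1 1 zero_le_one zero_le_one
    rw [one_smul] at this
    rw [this]; ring
  have dqn : dist q n = ‖v‖ := by rw [hn, dist_exp_aux, norm_neg]
  have dqx : dist q x = ‖v‖ := dist_exp_aux H q v
  have hr : 0 ≤ (1 - l) / l := div_nonneg (by linarith) h0.le
  set x' := H.exp m (-(((1 - l) / l) • e)) with hx'
  have hlogn : H.log m n = ((1 + l) / l) • e := by
    apply ray_aux
    · rw [le_div_iff₀ h0]; linarith
    · have := comp_aux H m n q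
      rw [dist_comm, dqn] at this
      refine this.trans (le_of_eq ?_)
      rw [hen]; field_simp; ring
    · rw [← H.dist_eq, dmn, hen]; field_simp; ring
  have dx'q : dist q x' = ‖v‖ := by
    have := dist_opp_aux H m e 1 ((1 - l) / l) zero_le_one hr
    rw [one_smul, he, H.exp_log, ← he] at this
    rw [hx', this, hen]; field_simp; ring
  have dx'n : dist n x' = 2 * ‖v‖ := by
    have := dist_opp_aux H m e ((1 + l) / l) ((1 - l) / l) (div_nonneg (by linarith) h0.le) hr
    rw [← hlogn, H.exp_log] at this
    rw [hx', this, hen]; field_simp; ring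
  have key : ∀ z : M, dist q z = ‖v‖ → dist n z = 2 * ‖v‖ → H.log n z = (2 : ℝ) • H.log n q := by
    intro z hz1 hz2
    have hnq : ‖H.log n q‖ = ‖v‖ := by rw [← H.dist_eq, dist_comm, dqn]
    apply ray_aux _ _ _ (by norm_num)
    · have := comp_aux H n z q
      rw [dist_comm, hz1] at this
      rw [hnq]; linarith
    · rw [← H.dist_eq, hz2, hnq]
  have hxx : x = x' := by
    have e1 := key x dqx (by rw [dist_comm, dxn])
    have e2 := key x' dx'q dx'n
    rw [← H.exp_log n x, ← H.exp_log n x', e1, e2]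
  rw [hxx, hx', H.log_exp]

/-- point on a geodesic from `q` to `x`. -/
theorem mid_aux (q x : M) (l : ℝ) (h0 : 0 < l) (h1 : l < 1) :
    ∃ (m : M) (E : H.T m), H.log m x = (1 - l) • E ∧ H.log m q = -(l • E) ∧ ‖E‖ = dist q x := by
  have := geo_aux H q (H.log q x) l h0 h1
  rw [H.exp_log] at this
  refine ⟨H.exp q (l • H.log q x), -(l⁻¹ • H.log (H.exp q (l • H.log q x)) q), ?_, ?_, ?_⟩
  · rw [this, smul_neg, smul_smul, div_eq_mul_inv]
  · rw [smul_neg, neg_neg, smul_smul, mul_inv_cancel₀ h0.ne', one_smul]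
  · rw [norm_neg, norm_smul, ← H.dist_eq, dist_comm, dist_exp_aux, norm_smul, norm_inv,
      H.dist_eq q x, ← mul_assoc, inv_mul_cancel₀ (by simpa using h0.ne'), one_mul]

theorem geo_dist_aux (q x : M) (t : ℝ) (ht : t < 1) :
    dist x (H.exp q (t • H.log q x)) ≤ (1 - t) * dist q x := by
  rcases le_or_gt t 0 with h | h
  · have := dist_triangle_left x (H.exp q (t • H.log q x)) q
    rw [dist_exp_aux, norm_smul, ← H.dist_eq, Real.norm_of_nonpos h] at this
    linarith
  · have := geo_aux H q (H.log q x) t h ht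
    rw [H.exp_log] at this
    rw [dist_comm, H.dist_eq, this, norm_neg, norm_smul, ← H.dist_eq _ q, dist_comm _ q,
      dist_exp_aux, norm_smul, ← H.dist_eq, Real.norm_of_nonneg h.le,
      Real.norm_of_nonneg (div_nonneg (by linarith) h.le)]
    apply le_of_eq; field_simp

theorem step_aux (f : M → ℝ) (G : (x : M) → H.T x) (hconv : GConvex H f G)
    (x y q : M) (l : ℝ) (h0 : 0 < l) (h1 : l < 1) :
    (1 - l) * (f y - f q) - l * (f x - f y) ≤ ‖G y‖ *
      Real.sqrt (l * dist x y ^ 2 + (1 - l) * dist y q ^ 2 - l * (1 - l) * dist x q ^ 2) := by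
  obtain ⟨m, E, hx, hq, hE⟩ := mid_aux H q x l h0 h1
  have c1 := hconv x m
  have c2 := hconv q m
  have c3 := hconv m y
  rw [hx, inner_smul_right] at c1
  rw [hq, inner_neg_right, inner_smul_right] at c2
  have hi : -(‖G y‖ * dist y m) ≤ inner ℝ (G y) (H.log y m) := by
    rw [H.dist_eq]
    exact neg_le_of_abs_le (abs_real_inner_le_norm _ _)
  have d1 := comp_aux H m y x
  have d2 := comp_aux H m y q
  have d1' := pow_le_pow_left₀ (norm_nonneg _) d1 2
  have d2' := pow_le_pow_left₀ (norm_nonneg _) d2 2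
  rw [norm_sub_sq_real, hx, inner_smul_right, norm_smul, Real.norm_of_nonneg (by linarith),
    ← H.dist_eq, hE] at d1'
  rw [norm_sub_sq_real, hq, inner_neg_right, inner_smul_right, norm_neg, norm_smul,
    Real.norm_of_nonneg h0.le, ← H.dist_eq, hE] at d2'
  have hd : dist y m ≤ Real.sqrt
      (l * dist x y ^ 2 + (1 - l) * dist y q ^ 2 - l * (1 - l) * dist x q ^ 2) := by
    apply Real.le_sqrt_of_sq_le
    have e1 := mul_le_mul_of_nonneg_left d1' h0.le
    have e2 := mul_le_mul_of_nonneg_left d2' (by linarith : 0 ≤ 1 - l)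
    rw [dist_comm x y, dist_comm x q, dist_comm y m]
    linarith
  have e1 := mul_le_mul_of_nonneg_left c1 h0.le
  have e2 := mul_le_mul_of_nonneg_left c2 (by linarith : 0 ≤ 1 - l)
  have e3 := mul_le_mul_of_nonneg_left hd (norm_nonneg (G y))
  linarith

theorem core_aux (f : M → ℝ) (G : (x : M) → H.T x)
    (hf : HasRGrad H f G) (hconv : GConvex H f G)
    (x : M) (η : ℝ) (hη : 0 < η) (y : M)
    (hmin : ∀ z, dist x y ^ 2 + 2 * η * (f y - f z) ≤ dist x z ^ 2) :
    η * ‖G y‖ ^ 2 ≤ f x - f y := by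
  set A := ‖G y‖ ^ 2 with hA
  set U := dist x y ^ 2 with hU
  set K := f x - f y with hK
  have hU0 : 0 ≤ U := sq_nonneg _
  have hA0 : 0 ≤ A := sq_nonneg _
  -- limit of difference quotient
  have hder := (hf y (-(G y)))
  rw [inner_neg_right, real_inner_self_eq_norm_sq] at hder
  have hlim : Tendsto (fun t : ℝ => t⁻¹ * (f y - f (H.exp y (t • (-(G y)))))) (𝓝[>] 0) (𝓝 A) := by
    have h := hder.tendsto_slope_zero_right
    have h' := h.neg
    simp only [neg_neg] at h'
    refine h'.congr (fun t => ?_)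
    have hy : H.exp y 0 = y := by
      have : dist y (H.exp y 0) = 0 := by rw [dist_exp_aux, norm_zero]
      exact (dist_eq_zero.1 this).symm
    simp only [zero_add, zero_smul, hy, smul_eq_mul]
    ring
  have main : ∀ κ : ℝ, 0 < κ →
      A - κ * K ≤ ‖G y‖ * Real.sqrt (κ ^ 2 * U + A - 2 * κ * η * A) := by
    intro κ hκ
    have ht : Tendsto (fun t : ℝ => t) (𝓝[>] 0) (𝓝 0) := tendsto_nhdsWithin_of_tendsto_nhds tendsto_id
    have hl : Tendsto (fun t : ℝ => 1 - κ * t) (𝓝[>] 0) (𝓝 1) := by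
      simpa using (tendsto_const_nhds (x := (1 : ℝ))).sub (ht.const_mul κ)
    have hL : Tendsto (fun t : ℝ => (1 - κ * t) * (t⁻¹ * (f y - f (H.exp y (t • (-(G y)))))) - κ * K)
        (𝓝[>] 0) (𝓝 (A - κ * K)) := by
      simpa using (hl.mul hlim).sub_const (κ * K)
    have hR : Tendsto (fun t : ℝ => ‖G y‖ * Real.sqrt (κ ^ 2 * U + (1 - κ * t) * A
        - 2 * κ * η * ((1 - κ * t) * (t⁻¹ * (f y - f (H.exp y (t • (-(G y)))))))))
        (𝓝[>] 0) (𝓝 (‖G y‖ * Real.sqrt (κ ^ 2 * U + A - 2 * κ * η * A))) := by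
      apply Tendsto.const_mul
      apply Tendsto.sqrt
      simpa using ((hl.mul_const A).const_add (κ ^ 2 * U)).sub ((hl.mul hlim).const_mul (2 * κ * η))
    refine le_of_tendsto_of_tendsto hL hR ?_
    have hev : ∀ᶠ t : ℝ in 𝓝[>] 0, 0 < 1 - κ * t := hl.eventually (lt_mem_nhds one_pos)
    filter_upwards [hev, self_mem_nhdsWithin] with t h1 h2
    have h2 : 0 < t := h2
    set q := H.exp y (t • (-(G y))) with hq
    have hs := step_aux H f G hconv x y q (κ * t) (by positivity) (by linarith)
    have hdq : dist y q ^ 2 = t ^ 2 * A := by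
      rw [hq, dist_exp_aux, norm_smul, norm_neg, Real.norm_of_nonneg h2.le, mul_pow]
    rw [hdq] at hs
    have hle : κ * t * dist x y ^ 2 + (1 - κ * t) * (t ^ 2 * A) - κ * t * (1 - κ * t) * dist x q ^ 2
        ≤ t ^ 2 * (κ ^ 2 * U + (1 - κ * t) * A - 2 * κ * η * ((1 - κ * t) * (t⁻¹ * (f y - f q)))) := by
      have := mul_le_mul_of_nonneg_left (hmin q) (by positivity : 0 ≤ κ * t * (1 - κ * t))
      have e : t ^ 2 * (κ ^ 2 * U + (1 - κ * t) * A
          - 2 * κ * η * ((1 - κ * t) * (t⁻¹ * (f y - f q)))) =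
          t ^ 2 * κ ^ 2 * U + t ^ 2 * (1 - κ * t) * A
          - 2 * κ * η * t * (1 - κ * t) * (f y - f q) := by
        field_simp
      rw [e, ← hU]
      linarith
    have hs2 := hs.trans (mul_le_mul_of_nonneg_left (Real.sqrt_le_sqrt hle) (norm_nonneg _))
    rw [Real.sqrt_mul (by positivity), Real.sqrt_sq h2.le] at hs2
    have e : (1 - κ * t) * (f y - f q) - κ * t * (f x - f y) =
        t * ((1 - κ * t) * (t⁻¹ * (f y - f q)) - κ * K) := by
      field_simp
      ring
    rw [e] at hs2
    exact le_of_mul_le_mul_left (hs2.trans (le_of_eq (mul_left_comm _ _ _))) h2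
  have hK0 : A = 0 → 0 ≤ K := by
    intro h
    have hg : G y = 0 := by
      rw [hA] at h
      exact norm_eq_zero.1 (pow_eq_zero_iff two_ne_zero |>.1 h)
    have := hconv x y
    rw [hg, inner_zero_left] at this
    linarith
  by_contra hcon
  push Not at hcon
  have hApos : 0 < A := by
    rcases hA0.lt_or_eq with h | h
    · exact h
    · have := hK0 h.symm
      rw [← h] at hcon; linarith
  set D := η * A - K with hD
  have hDpos : 0 < D := by linarith
  obtain ⟨κ, hκ, hκ1, hκ2⟩ : ∃ κ : ℝ, 0 < κ ∧ κ * η ≤ 1 / 2 ∧ κ * U < 2 * D := by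
    refine ⟨min (1 / (2 * η)) (D / (U + 1)), by positivity, ?_, ?_⟩
    · calc _ ≤ 1 / (2 * η) * η := mul_le_mul_of_nonneg_right (min_le_left _ _) hη.le
        _ = 1 / 2 := by field_simp
    · calc _ ≤ D / (U + 1) * U := mul_le_mul_of_nonneg_right (min_le_right _ _) hU0
        _ ≤ D / (U + 1) * (U + 1) := by gcongr; linarith
        _ = D := by field_simp
        _ < 2 * D := by linarith
  have h := main κ hκ
  have hKA : κ * K < κ * (η * A) := mul_lt_mul_of_pos_left (by linarith) hκ
  have hηA : κ * η * A ≤ 1 / 2 * A := mul_le_mul_of_nonneg_right hκ1 hA0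
  have hpos : 0 ≤ A - κ * K := by linarith
  have hsq := pow_le_pow_left₀ hpos h 2
  have harg : 0 ≤ κ ^ 2 * U + A - 2 * κ * η * A := by nlinarith [mul_nonneg (sq_nonneg κ) hU0]
  rw [mul_pow, Real.sq_sqrt harg, ← hA] at hsq
  have h3 : κ * A * (2 * D) ≤ κ * A * (κ * U) := by
    rw [hD]; nlinarith [sq_nonneg (κ * K)]
  have := le_of_mul_le_mul_left h3 (by positivity)
  linarith

end

theorem proximal_characterization
    {M : Type*} [MetricSpace M] (H : Hadamard M) (f : M → ℝ) (G : (x : M) → H.T x)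
    (hf : HasRGrad H f G) (hconv : GConvex H f G)
    (x : M) (η : ℝ) (hη : 0 < η) (y : M) :
    H.exp y (η • G y) = x ↔
      ∀ z : M, f y + 1 / (2 * η) * dist x y ^ 2 ≤ f z + 1 / (2 * η) * dist x z ^ 2 := by
  have equi : ∀ z : M, (f y + 1 / (2 * η) * dist x y ^ 2 ≤ f z + 1 / (2 * η) * dist x z ^ 2) ↔
      dist x y ^ 2 + 2 * η * (f y - f z) ≤ dist x z ^ 2 := by
    intro z
    rw [← mul_le_mul_iff_of_pos_left (by positivity : 0 < 2 * η)]
    have e : ∀ a b : ℝ, 2 * η * (a + 1 / (2 * η) * b) = 2 * η * a + b := by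
      intro a b; field_simp
    rw [e, e]
    constructor <;> intro h <;> linarith
  rw [forall_congr' equi]
  constructor
  · intro h z
    have hl : H.log y x = η • G y := by rw [← h, H.log_exp]
    have c := pow_le_pow_left₀ (norm_nonneg _) (comp_aux H y x z) 2
    rw [norm_sub_sq_real, ← H.dist_eq, hl, inner_smul_left, dist_comm y x] at c
    have c2 := mul_le_mul_of_nonneg_left (hconv z y) hη.le
    simp only [conj_trivial] at c
    nlinarith [sq_nonneg ‖H.log y z‖]
  · intro hmin
    set u := H.log y x with hu
    have hun : ‖u‖ = dist x y := by rw [hu, ← H.dist_eq, dist_comm]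
    have hy : H.exp y 0 = y := by
      have : dist y (H.exp y 0) = 0 := by rw [dist_exp_aux, norm_zero]
      exact (dist_eq_zero.1 this).symm
    have hder := hf y u
    -- first-order condition along `u`
    have h1 : η * inner ℝ (G y) u = ‖u‖ ^ 2 := by
      have hd2 : HasDerivAt (fun t : ℝ => 2 * η * f (H.exp y (t • u)) + (1 - t) ^ 2 * ‖u‖ ^ 2)
          (2 * η * inner ℝ (G y) u + (2 * (1 - 0) * (-1)) * ‖u‖ ^ 2) 0 := by
        refine (hder.const_mul (2 * η)).add (HasDerivAt.mul_const ?_ _)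
        have := ((hasDerivAt_id (0 : ℝ)).const_sub 1).fun_pow 2
        simpa using this
      have hloc : IsLocalMin
          (fun t : ℝ => 2 * η * f (H.exp y (t • u)) + (1 - t) ^ 2 * ‖u‖ ^ 2) 0 := by
        filter_upwards [gt_mem_nhds (zero_lt_one : (0 : ℝ) < 1)] with t ht
        have a1 := hmin (H.exp y (t • u))
        have a2 := pow_le_pow_left₀ dist_nonneg (geo_dist_aux H y x t ht) 2
        rw [mul_pow, dist_comm y x, ← hu, ← hun] at a2
        rw [← hun] at a1
        simp only [zero_smul, hy]
        linarith
      have := hloc.hasDerivAt_eq_zero hd2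
      linarith
    have h2 : η * ‖G y‖ ^ 2 ≤ inner ℝ (G y) u := by
      have hlim := hder.tendsto_slope_zero_right
      refine ge_of_tendsto hlim ?_
      filter_upwards [self_mem_nhdsWithin,
        mem_nhdsWithin_of_mem_nhds (gt_mem_nhds (zero_lt_one : (0 : ℝ) < 1))] with s hs hs1
      have hs : 0 < s := hs
      have hs1 : s < 1 := hs1
      simp only [zero_add, zero_smul, hy, smul_eq_mul]
      have hc := core_aux H f G hf hconv (H.exp y (s • u)) (s * η) (by positivity) y (by
        intro z
        have g := geo_dist_aux H y x s hs1
        rw [← hu, dist_comm y x, ← hun] at g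
        have tr := (dist_triangle x (H.exp y (s • u)) z).trans (add_le_add_left g _)
        have tr2 := pow_le_pow_left₀ dist_nonneg tr 2
        have hm := hmin z
        rw [dist_comm _ y, dist_exp_aux, norm_smul, Real.norm_of_nonneg hs.le, mul_pow]
        rw [← hun] at hm
        set b := dist (H.exp y (s • u)) z
        have hm2 := mul_le_mul_of_nonneg_left (hm.trans tr2) hs.le
        nlinarith [mul_nonneg (by linarith : 0 ≤ 1 - s) (sq_nonneg (b - s * ‖u‖))])
      rw [inv_mul_eq_div, le_div_iff₀ hs]
      linarith
    have h3 : ‖η • G y - u‖ ^ 2 ≤ 0 := by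
      rw [norm_sub_sq_real, inner_smul_left, norm_smul, Real.norm_of_nonneg hη.le]
      simp only [conj_trivial]
      nlinarith [mul_le_mul_of_nonneg_left h2 hη.le]
    have h4 : ‖η • G y - u‖ = 0 :=
      pow_eq_zero_iff two_ne_zero |>.1 (le_antisymm h3 (sq_nonneg _))
    rw [sub_eq_zero.1 (norm_eq_zero.1 h4), hu, H.exp_log]
end

section
/- Let (M, g) be a Hadamard manifold and let f : M → ℝ be a g-convex differentiable function with a minimizer x* ∈ M. Let η > 0 and let {x_t} be a sequence in M generated by the proximal gradient iteration: for each t, x_{t+1} solves x_t = Exp_{x_{t+1}}(η grad f(x_{t+1})). Then for every t ≥ 1, f(x_t) − f(x*) ≤ d(x_0, x*)²/(η t). -/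
open scoped RealInnerProductSpace

/-- Theorem: convergence of the proximal gradient method.
If `f` is `g`-convex with minimizer `x*` and `x_{t+1}` solves
`x_t = Exp_{x_{t+1}} (η grad f (x_{t+1}))`, then for every `t ≥ 1`,
`f(x_t) − f(x*) ≤ d(x_0, x*)² / (η t)`. -/
theorem proximal_gradient_convergence
    {M : Type*} [MetricSpace M] (H : Hadamard M) (f : M → ℝ) (G : (x : M) → H.T x)
    (hf : HasRGrad H f G) (hconv : GConvex H f G)
    (xstar : M) (hmin : ∀ z : M, f xstar ≤ f z)
    (η : ℝ) (hη : 0 < η) (x : ℕ → M)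
    (hiter : ∀ t : ℕ, H.exp (x (t + 1)) (η • G (x (t + 1))) = x t) :
    ∀ t : ℕ, 1 ≤ t → f (x t) - f xstar ≤ dist (x 0) xstar ^ 2 / (η * t) := by
  have hlog : ∀ t, H.log (x (t + 1)) (x t) = η • G (x (t + 1)) := by
    intro t
    have h := H.log_exp (x (t + 1)) (η • G (x (t + 1)))
    rwa [hiter t] at h
  have hmono : ∀ t, f (x (t + 1)) ≤ f (x t) := by
    intro t
    have h := hconv (x t) (x (t + 1))
    rw [hlog t, real_inner_smul_right] at h
    have h2 : 0 ≤ ⟪G (x (t + 1)), G (x (t + 1))⟫ := real_inner_self_nonneg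
    have h3 := mul_nonneg hη.le h2
    linarith
  have hstep : ∀ t, 2 * η * (f (x (t + 1)) - f xstar) + dist (x (t + 1)) xstar ^ 2
      ≤ dist (x t) xstar ^ 2 := by
    intro t
    have h := hconv xstar (x (t + 1))
    have hc := H.comparison (x (t + 1)) (η • G (x (t + 1))) (H.log (x (t + 1)) xstar)
    rw [hiter t, H.exp_log] at hc
    have hc2 := pow_le_pow_left₀ (norm_nonneg _) hc 2
    rw [norm_sub_sq_real, real_inner_smul_left, ← H.dist_eq] at hc2
    have h5 := mul_le_mul_of_nonneg_left h hη.le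
    nlinarith [sq_nonneg ‖η • G (x (t + 1))‖]
  have hsum : ∀ t : ℕ, 2 * η * t * (f (x t) - f xstar) + dist (x t) xstar ^ 2
      ≤ dist (x 0) xstar ^ 2 := by
    intro t
    induction t with
    | zero => simp
    | succ n ih =>
      have h1 := hstep n
      have h2 : 0 ≤ 2 * η * (n : ℝ) := by positivity
      have h3 := mul_le_mul_of_nonneg_left (hmono n) h2
      push_cast
      linarith
  intro t ht
  have ht' : (0 : ℝ) < t := by exact_mod_cast ht
  rw [le_div_iff₀ (mul_pos hη ht')]
  have h1 := hsum t
  have h2 : 0 ≤ η * t * (f (x t) - f xstar) :=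
    mul_nonneg (mul_pos hη ht').le (sub_nonneg.mpr (hmin _))
  nlinarith [sq_nonneg (dist (x t) xstar)]
end

section
/- Let (M, g) be a Hadamard manifold and let f : M → ℝ be a g-convex differentiable function. Let η > 0, let x ∈ M, and suppose x' ∈ M solves x = Exp_{x'}(η grad f(x')). Then for every z ∈ M, η (f(x) − f(z)) ≤ −(1/2) d(x', z)² + (1/2) d(x, z)² + (η²/2) ‖grad f(x)‖_x². -/
open scoped RealInnerProductSpace

/-- if `x'` solves `x = Exp_{x'} (η grad f x')`, then for every `z`,
`η (f x − f z) ≤ −(1/2) d(x',z)² + (1/2) d(x,z)² + (η²/2) ‖grad f x‖²`. -/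
theorem proximal_step_inequality_at_start
    {M : Type*} [MetricSpace M] (H : Hadamard M) (f : M → ℝ) (G : (x : M) → H.T x)
    (hf : HasRGrad H f G) (hconv : GConvex H f G)
    (η : ℝ) (hη : 0 < η) (x x' : M) (hx' : H.exp x' (η • G x') = x) :
    ∀ z : M, η * (f x - f z) ≤
      -(1 / 2) * dist x' z ^ 2 + 1 / 2 * dist x z ^ 2 + η ^ 2 / 2 * ‖G x‖ ^ 2 := by
  intro z
  have h1 := hconv z x'
  have h2 := hconv x' x
  have hl : H.log x' x = η • G x' := by rw [← hx', H.log_exp]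
  have hc := H.comparison x' (η • G x') (H.log x' z)
  rw [hx', H.exp_log] at hc
  have hc2 : ‖η • G x' - H.log x' z‖ ^ 2 ≤ dist x z ^ 2 :=
    pow_le_pow_left₀ (norm_nonneg _) hc 2
  rw [norm_sub_sq_real, real_inner_smul_left, ← hl, ← H.dist_eq, ← H.dist_eq,
    dist_comm x' x] at hc2
  have hcs := neg_le_of_abs_le (abs_real_inner_le_norm (G x) (H.log x x'))
  rw [← H.dist_eq] at hcs
  have h3 : η * (f x' - f z) ≤ η * (-⟪G x', H.log x' z⟫) :=
    mul_le_mul_of_nonneg_left (by linarith) hη.le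
  have h4 : η * (f x - f x') ≤ η * (‖G x‖ * dist x x') :=
    mul_le_mul_of_nonneg_left (by linarith) hη.le
  nlinarith [sq_nonneg (η * ‖G x‖ - dist x x')]
end

section
/- Let (M, g) be a Hadamard manifold, let {f_t}_{t≥0} be a sequence of g-convex differentiable functions on M, let {η_t}_{t≥0} be positive step sizes, and let {x_t} be generated by: for each t, x_{t+1} solves x_t = Exp_{x_{t+1}}(η_t grad f_t(x_{t+1})). Then for every z ∈ M and every T ≥ 1, Σ_{t=0}^{T−1} η_t (f_t(x_t) − f_t(z)) ≤ (1/2) d(x_0, z)² + Σ_{t=0}^{T−1} (η_t²/2) ‖grad f_t(x_t)‖_{x_t}². -/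
open scoped RealInnerProductSpace

/-- telescoped regret-type bound for proximal iterations with
varying `g`-convex objectives `f_t` and positive step sizes `η_t`:
`Σ_{t=0}^{T−1} η_t (f_t(x_t) − f_t(z)) ≤ (1/2) d(x_0,z)² + Σ_{t=0}^{T−1} (η_t²/2) ‖grad f_t(x_t)‖²`. -/
theorem proximal_telescoped_bound
    {M : Type*} [MetricSpace M] (H : Hadamard M)
    (f : ℕ → M → ℝ) (G : (t : ℕ) → (x : M) → H.T x)
    (hf : ∀ t, HasRGrad H (f t) (G t)) (hconv : ∀ t, GConvex H (f t) (G t))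
    (η : ℕ → ℝ) (hη : ∀ t, 0 < η t) (x : ℕ → M)
    (hiter : ∀ t : ℕ, H.exp (x (t + 1)) (η t • G t (x (t + 1))) = x t) :
    ∀ (z : M) (T : ℕ), 1 ≤ T →
      ∑ t ∈ Finset.range T, η t * (f t (x t) - f t z) ≤
        1 / 2 * dist (x 0) z ^ 2 +
          ∑ t ∈ Finset.range T, η t ^ 2 / 2 * ‖G t (x t)‖ ^ 2 := by
  intro z T _
  have step : ∀ t, η t * (f t (x t) - f t z) ≤
      1 / 2 * dist (x t) z ^ 2 - 1 / 2 * dist (x (t + 1)) z ^ 2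
        + η t ^ 2 / 2 * ‖G t (x t)‖ ^ 2 := by
    intro t
    have hη' := hη t
    have h1 := hconv t z (x (t + 1))
    have h2 := hconv t (x (t + 1)) (x t)
    have h3 := H.comparison (x (t + 1)) (η t • G t (x (t + 1))) (H.log (x (t + 1)) z)
    rw [hiter t, H.exp_log] at h3
    have h4 : ‖η t • G t (x (t + 1)) - H.log (x (t + 1)) z‖ ^ 2 ≤ dist (x t) z ^ 2 :=
      pow_le_pow_left₀ (norm_nonneg _) h3 2
    rw [norm_sub_sq_real, real_inner_smul_left, ← H.dist_eq] at h4
    have h5 : ‖η t • G t (x (t + 1))‖ = dist (x t) (x (t + 1)) := by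
      rw [dist_comm, H.dist_eq]
      conv_rhs => rw [← hiter t]
      rw [H.log_exp]
    rw [h5] at h4
    have h6 := (abs_le.1 (abs_real_inner_le_norm (G t (x t)) (H.log (x t) (x (t + 1))))).1
    rw [← H.dist_eq] at h6
    have h7 : f t (x t) - f t (x (t + 1)) ≤ ‖G t (x t)‖ * dist (x t) (x (t + 1)) := by
      linarith
    have h8 := mul_le_mul_of_nonneg_left h7 hη'.le
    have h9 := mul_le_mul_of_nonneg_left h1 hη'.le
    nlinarith [sq_nonneg (η t * ‖G t (x t)‖ - dist (x t) (x (t + 1)))]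
  have key : ∀ n, ∑ t ∈ Finset.range n, η t * (f t (x t) - f t z) ≤
      1 / 2 * dist (x 0) z ^ 2 - 1 / 2 * dist (x n) z ^ 2 +
        ∑ t ∈ Finset.range n, η t ^ 2 / 2 * ‖G t (x t)‖ ^ 2 := by
    intro n
    induction n with
    | zero => simp
    | succ k ih =>
      rw [Finset.sum_range_succ, Finset.sum_range_succ]
      linarith [step k]
  linarith [key T, sq_nonneg (dist (x T) z)]
end

section
/- Let (M, g) be a Hadamard manifold and let f : M → ℝ be continuously differentiable and μ-strongly g-convex with unique minimizer z* ∈ M. Fix a starting point z_0 ∈ M and define the sublevel-type sets D := {z ∈ M : d(z, z_0) ≤ √((2/μ)(f(z_0) − f(z*)))} and D_0 := {z ∈ M : d(z, z_0) ≤ √((2/μ)(f(z_0) − f(z*))) + (1/μ) max_{z ∈ D} ‖grad f(z)‖_z}. Suppose L_0 ≥ μ is a constant such that f is geodesically L_0-smooth on D_0 and ‖grad f(z)‖_z ≤ L_0 for all z ∈ D_0. Then the gradient descent iterates z_{t+1} = Exp_{z_t}(−(1/L_0) grad f(z_t)) remain in D_0 and satisfy f(z_t) − f(z*) ≤ (1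 − μ/(4L_0))^t (f(z_0) − f(z*)) for all t ≥ 0. -/
open scoped RealInnerProductSpace

/-- Theorem: linear convergence of gradient descent for
continuously differentiable, `μ`-strongly `g`-convex `f` with unique minimizer
`z*`. With `D`, `D₀` the sublevel-type sets built from `z₀`, `Gmax` the maximum
of `‖grad f‖` over `D`, and `L₀ ≥ μ` such that `f` is geodesically `L₀`-smooth on
`D₀` with `‖grad f z‖ ≤ L₀` on `D₀`, the iterates
`z_{t+1} = Exp_{z_t}(−(1/L₀) grad f(z_t))` remain in `D₀` and satisfy
`f(z_t) − f(z*) ≤ (1 − μ/(4L₀))^t (f(z₀) − f(z*))`. -/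
theorem gradient_descent_strongly_convex
    {M : Type*} [MetricSpace M] (H : Hadamard M) (f : M → ℝ) (G : (x : M) → H.T x)
    (hf : HasRGrad H f G)
    (hC1 : ∀ (x : M) (v : H.T x), ContDiff ℝ 1 fun t : ℝ => f (H.exp x (t • v)))
    (μ : ℝ) (hμ : 0 < μ) (hsconv : StronglyGConvex H f G μ)
    (zstar : M) (hmin : ∀ z : M, f zstar ≤ f z)
    (huniq : ∀ z : M, (∀ w : M, f z ≤ f w) → z = zstar)
    (z0 : M) (D D0 : Set M) (Gmax : ℝ)
    (hD : D = {z : M | dist z z0 ≤ Real.sqrt (2 / μ * (f z0 - f zstar))})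
    (hGmax : IsGreatest ((fun z => ‖G z‖) '' D) Gmax)
    (hD0 : D0 = {z : M | dist z z0 ≤ Real.sqrt (2 / μ * (f z0 - f zstar)) + 1 / μ * Gmax})
    (L0 : ℝ) (hL0 : μ ≤ L0)
    (hsmooth : ∀ x ∈ D0, ∀ y ∈ D0,
      f y ≤ f x + ⟪G x, H.log x y⟫ + L0 / 2 * dist x y ^ 2)
    (hgradbound : ∀ z ∈ D0, ‖G z‖ ≤ L0)
    (Z : ℕ → M) (hZ0 : Z 0 = z0)
    (hiter : ∀ t : ℕ, Z (t + 1) = H.exp (Z t) ((-(1 / L0)) • G (Z t))) :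
    ∀ t : ℕ, Z t ∈ D0 ∧
      f (Z t) - f zstar ≤ (1 - μ / (4 * L0)) ^ t * (f z0 - f zstar) := by
  have hL : 0 < L0 := lt_of_lt_of_le hμ hL0
  have hexp0 : ∀ x, H.exp x 0 = x := by
    intro x
    have h := H.dist_eq x (H.exp x 0)
    rw [H.log_exp, norm_zero] at h
    exact (dist_eq_zero.mp h).symm
  have hG0 : G zstar = 0 := by
    have h := hf zstar (G zstar)
    have hm : IsLocalMin (fun t : ℝ => f (H.exp zstar (t • G zstar))) 0 := by
      refine Filter.Eventually.of_forall fun t => ?_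
      simp only [zero_smul, hexp0]
      exact hmin _
    have := hm.hasDerivAt_eq_zero h
    exact inner_self_eq_zero.mp this
  have hPL : ∀ y, 2 * μ * (f y - f zstar) ≤ ‖G y‖ ^ 2 := by
    intro y
    have h := hsconv zstar y
    rw [dist_comm, H.dist_eq] at h
    have h2 : 0 ≤ ‖G y + μ • H.log y zstar‖ ^ 2 := sq_nonneg _
    rw [norm_add_sq_real, inner_smul_right, norm_smul, Real.norm_of_nonneg hμ.le] at h2
    nlinarith
  have hqg : ∀ z, dist z zstar ≤ Real.sqrt (2 / μ * (f z - f zstar)) := by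
    intro z
    have h := hsconv z zstar
    rw [hG0, inner_zero_left] at h
    apply Real.le_sqrt_of_sq_le
    rw [div_mul_eq_mul_div, le_div_iff₀ hμ]
    nlinarith
  have hz0D : z0 ∈ D := by
    rw [hD]
    simp only [Set.mem_setOf_eq, dist_self]
    exact Real.sqrt_nonneg _
  have hGz0 : ‖G z0‖ ≤ Gmax := hGmax.2 ⟨z0, hz0D, rfl⟩
  have hR : Real.sqrt (2 / μ * (f z0 - f zstar)) ≤ 1 / μ * Gmax := by
    have hn := norm_nonneg (G z0)
    refine le_trans (Real.sqrt_le_iff.mpr ⟨by positivity, ?_⟩)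
      (mul_le_mul_of_nonneg_left hGz0 (by positivity : 0 ≤ 1 / μ))
    have h := hPL z0
    have e : 2 / μ * (f z0 - f zstar) = (1 / μ) ^ 2 * (2 * μ * (f z0 - f zstar)) := by
      field_simp
    rw [e, mul_pow]
    exact mul_le_mul_of_nonneg_left h (by positivity)
  have hsub : ∀ z, f z ≤ f z0 → z ∈ D0 := by
    intro z hz
    rw [hD0]
    simp only [Set.mem_setOf_eq]
    have h1 := hqg z
    have h2 := hqg z0
    have h3 : Real.sqrt (2 / μ * (f z - f zstar)) ≤ Real.sqrt (2 / μ * (f z0 - f zstar)) := by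
      apply Real.sqrt_le_sqrt
      gcongr
    have h4 := dist_triangle_right z z0 zstar
    linarith
  have hstep : ∀ z, f z ≤ f z0 → ∀ s : ℝ, 0 ≤ s → f (H.exp z ((-s) • G z)) ≤ f z0 →
      f (H.exp z ((-s) • G z)) ≤ f z - s * ‖G z‖ ^ 2 + L0 / 2 * s ^ 2 * ‖G z‖ ^ 2 := by
    intro z hz s hs h
    have h1 := hsmooth z (hsub z hz) _ (hsub _ h)
    rw [H.dist_eq, H.log_exp, inner_smul_right, real_inner_self_eq_norm_sq, norm_smul,
      norm_neg, Real.norm_of_nonneg hs] at h1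
    linarith
  have hdesc : ∀ z, f z ≤ f z0 → f (H.exp z ((-(1 / L0)) • G z)) ≤ f z := by
    intro z hz
    by_contra! hcon
    have hGz : G z ≠ 0 := by
      intro h0
      rw [h0, smul_zero, hexp0] at hcon
      exact lt_irrefl _ hcon
    have hpos : 0 < ‖G z‖ ^ 2 := by positivity
    have hd := hf z (-G z)
    rw [inner_neg_right, real_inner_self_eq_norm_sq] at hd
    have hcont := (hC1 z (-G z)).continuous
    set φ : ℝ → ℝ := fun t => f (H.exp z (t • -G z)) with hφ
    have hφe : ∀ s, φ s = f (H.exp z ((-s) • G z)) := by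
      intro s
      simp only [hφ, smul_neg, neg_smul]
    have hφ0 : φ 0 = f z := by simp [hφ, hexp0]
    have hinv : 0 < 1 / L0 := by positivity
    have hev : ∀ᶠ s in nhdsWithin (0 : ℝ) (Set.Ioi 0), φ s < φ 0 := by
      have ht := hd.hasDerivWithinAt (s := Set.Ioi 0)
      rw [hasDerivWithinAt_iff_tendsto_slope' (by simp)] at ht
      have hn := ht.eventually_lt_const (show -‖G z‖ ^ 2 < 0 by linarith)
      filter_upwards [hn, self_mem_nhdsWithin] with s h1 h2
      have h2' : 0 < s := h2
      rw [slope_def_field, sub_zero, div_lt_iff₀ h2'] at h1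
      linarith
    obtain ⟨a, ha1, ha2⟩ := (hev.and (Ioo_mem_nhdsGT hinv)).exists
    obtain ⟨s, hs, hse⟩ := intermediate_value_Icc ha2.2.le hcont.continuousOn
      (show φ 0 ∈ Set.Icc (φ a) (φ (1 / L0)) from ⟨ha1.le, by rw [hφ0, hφe]; exact hcon.le⟩)
    have hs0 : 0 < s := lt_of_lt_of_le ha2.1 hs.1
    have h5 : f (H.exp z ((-s) • G z)) = f z := by rw [← hφe, hse, hφ0]
    have h6 := hstep z hz s hs0.le (h5.le.trans hz)
    rw [h5] at h6
    have h7 : s * L0 ≤ 1 := by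
      have := hs.2
      rwa [le_div_iff₀ hL] at this
    have h8 : 0 < s * ‖G z‖ ^ 2 := by positivity
    nlinarith
  have hq : 0 ≤ 1 - μ / (4 * L0) := by
    rw [sub_nonneg, div_le_one (by positivity)]
    linarith
  have key : ∀ t, f (Z t) ≤ f z0 ∧
      f (Z t) - f zstar ≤ (1 - μ / (4 * L0)) ^ t * (f z0 - f zstar) := by
    intro t
    induction t with
    | zero => simp [hZ0]
    | succ t ih =>
      obtain ⟨h1, h2⟩ := ih
      have h3 := hdesc _ h1
      have h4 := hstep _ h1 (1 / L0) (by positivity) (h3.trans h1)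
      rw [hiter]
      refine ⟨h3.trans h1, ?_⟩
      have h5 := hPL (Z t)
      have h6 := hmin (Z t)
      have e : f (Z t) - 1 / L0 * ‖G (Z t)‖ ^ 2 + L0 / 2 * (1 / L0) ^ 2 * ‖G (Z t)‖ ^ 2
          = f (Z t) - 1 / (2 * L0) * ‖G (Z t)‖ ^ 2 := by
        field_simp
        ring
      rw [e] at h4
      have h7 : 1 / (2 * L0) * (2 * μ * (f (Z t) - f zstar)) ≤ 1 / (2 * L0) * ‖G (Z t)‖ ^ 2 :=
        mul_le_mul_of_nonneg_left h5 (by positivity)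
      have e2 : 1 / (2 * L0) * (2 * μ * (f (Z t) - f zstar))
          = 4 * (μ / (4 * L0) * (f (Z t) - f zstar)) := by
        field_simp
      have h8 : 0 ≤ μ / (4 * L0) * (f (Z t) - f zstar) :=
        mul_nonneg (by positivity) (by linarith)
      have h9 := mul_le_mul_of_nonneg_left h2 hq
      rw [pow_succ', mul_assoc]
      linarith
  exact fun t => ⟨hsub _ (key t).1, (key t).2⟩
end
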